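/- Let n ≥ 3, σ > 0, ρ ∈ (−1/n, 1), and let Z ~ N(μ, σ²Ξ) be an n-dimensional Gaussian random vector, where Ξ is the n×n matrix with diagonal entries 1 and all off-diagonal entries ρ, and suppose Pμ ≠ 0. Then for every θ ∈ S^{n−1} ∩ ⟨𝟙⟩^⊥, Var(T_{χ(Z)}(θ)) = [ f_{n−1}(‖Pμ‖/(σ√(1−ρ))) − g_{n−1}(‖Pμ‖/(σ√(1−ρ))) ] · (χ(μ)ᵀθ)² + g_{n−1}(‖Pμ‖/(σ√(1−ρ))). -/

import Mathlib

open MeasureTheory ProbabilityTheory Matrix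

noncomputable section

def euclNorm {n : ℕ} (x : Fin n → ℝ) : ℝ := Real.sqrt (∑ i, x i ^ 2)

def centerMat (n : ℕ) : Matrix (Fin n) (Fin n) ℝ :=
  1 - (n : ℝ)⁻¹ • Matrix.of (fun _ _ => (1 : ℝ))

def chi {n : ℕ} (z : Fin n → ℝ) : Fin n → ℝ :=
  (euclNorm ((centerMat n).mulVec z))⁻¹ • (centerMat n).mulVec z

def meanVec {Ω : Type*} [MeasurableSpace Ω] (P : Measure Ω) {n : ℕ}
    (X : Ω → Fin n → ℝ) : Fin n → ℝ := fun i => ∫ ω, X ω i ∂P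

def covMatrix {Ω : Type*} [MeasurableSpace Ω] (P : Measure Ω) {n : ℕ}
    (X : Ω → Fin n → ℝ) : Matrix (Fin n) (Fin n) ℝ :=
  Matrix.of fun i j => ∫ ω, (X ω i - meanVec P X i) * (X ω j - meanVec P X j) ∂P

def MRL {Ω : Type*} [MeasurableSpace Ω] (P : Measure Ω) {n : ℕ}
    (X : Ω → Fin n → ℝ) : ℝ := euclNorm (meanVec P X)

def MD {Ω : Type*} [MeasurableSpace Ω] (P : Measure Ω) {n : ℕ}
    (X : Ω → Fin n → ℝ) : Fin n → ℝ := (euclNorm (meanVec P X))⁻¹ • meanVec P X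

def stdGaussianPi (n : ℕ) : Measure (Fin n → ℝ) :=
  Measure.pi fun _ => gaussianReal 0 1

def IsGaussianVec {Ω : Type*} [MeasurableSpace Ω] (P : Measure Ω) {n : ℕ}
    (Z : Ω → Fin n → ℝ) (m : Fin n → ℝ) (S : Matrix (Fin n) (Fin n) ℝ) : Prop :=
  ∃ A : Matrix (Fin n) (Fin n) ℝ, A * Aᵀ = S ∧
    Measure.map Z P = Measure.map (fun x => m + A.mulVec x) (stdGaussianPi n)

def ascFact (a : ℝ) (k : ℕ) : ℝ := ∏ i ∈ Finset.range k, (a + i)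

def kummerM (a b z : ℝ) : ℝ := ∑' k : ℕ, (ascFact a k / ascFact b k) * z ^ k / (Nat.factorial k)

def varrho (m : ℕ) (x : ℝ) : ℝ :=
  (Real.Gamma (((m : ℝ) + 1) / 2) / (Real.sqrt 2 * Real.Gamma (((m : ℝ) + 2) / 2))) * x *
    kummerM (1 / 2) (((m : ℝ) + 2) / 2) (-x ^ 2 / 2)

def fFun (m : ℕ) (x : ℝ) : ℝ :=
  1 - (((m : ℝ) - 1) / m) * kummerM 1 ((m : ℝ) / 2 + 1) (-x ^ 2 / 2) - (varrho m x) ^ 2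

def gFun (m : ℕ) (x : ℝ) : ℝ :=
  (1 / (m : ℝ)) * kummerM 1 ((m : ℝ) / 2 + 1) (-x ^ 2 / 2)

def Vmat (n : ℕ) : Matrix (Fin n) (Fin n) ℝ :=
  Matrix.of fun i j =>
    if (j : ℕ) = n - 1 then 1 / Real.sqrt n
    else if (i : ℕ) = (j : ℕ) then
      ((n : ℝ) - 1 - (j : ℕ)) / Real.sqrt (((n : ℝ) - 1 - (j : ℕ)) * ((n : ℝ) - (j : ℕ)))
    else if (j : ℕ) < (i : ℕ) then
      -(1 / Real.sqrt (((n : ℝ) - 1 - (j : ℕ)) * ((n : ℝ) - (j : ℕ))))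
    else 0

def projMat (n : ℕ) : Matrix (Fin n) (Fin n) ℝ :=
  Matrix.diagonal fun i => if (i : ℕ) < n - 1 then 1 else 0

def embedZero {n : ℕ} (v : Fin (n - 1) → ℝ) : Fin n → ℝ :=
  fun i => if h : (i : ℕ) < n - 1 then v ⟨i, h⟩ else 0

def Ximat (n : ℕ) (r : ℝ) : Matrix (Fin n) (Fin n) ℝ :=
  Matrix.of fun i j => if i = j then 1 else r

def stdNormCDF (x : ℝ) : ℝ := (gaussianReal 0 1 (Set.Iic x)).toReal

def thetaTilde : Fin 2 → ℝ := ![Real.sqrt 2 / 2, -(Real.sqrt 2 / 2)]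


lemma aux_beta_int {a c : ℝ} (ha : 0 < a) (hc : 0 < c) :
    IntegrableOn (fun s : ℝ => s ^ (a - 1) * (1 - s) ^ (c - 1)) (Set.Ioo 0 1) ∧
    ∫ s in Set.Ioo (0:ℝ) 1, s ^ (a - 1) * (1 - s) ^ (c - 1) = ProbabilityTheory.beta a c := by
  have h0 := Complex.betaIntegral_convergent (u := a) (v := c) (by simpa) (by simpa)
  rw [intervalIntegrable_iff_integrableOn_Ioc_of_le (by simp)] at h0
  have hcongr : ∀ x ∈ Set.Ioc (0:ℝ) 1, RCLike.re ((x:ℂ) ^ ((a:ℂ) - 1) * (1 - (x:ℂ)) ^ ((c:ℂ) - 1))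
      = x ^ (a - 1) * (1 - x) ^ (c - 1) := by
    rintro x ⟨hx1, hx2⟩
    norm_cast
    rw [← Complex.ofReal_cpow, ← Complex.ofReal_cpow, RCLike.re_to_complex,
        Complex.re_mul_ofReal, Complex.ofReal_re]
    all_goals linarith
  constructor
  · have h1 : IntegrableOn (fun x : ℝ => RCLike.re ((x:ℂ) ^ ((a:ℂ) - 1) * (1 - (x:ℂ)) ^ ((c:ℂ) - 1)))
      (Set.Ioc 0 1) := h0.re
    exact (h1.congr_fun hcongr measurableSet_Ioc).mono_set Set.Ioo_subset_Ioc_self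
  · rw [ProbabilityTheory.beta_eq_betaIntegralReal a c ha hc,
      Complex.betaIntegral, intervalIntegral.integral_of_le (by norm_num),
      ← integral_Ioc_eq_integral_Ioo, ← RCLike.re_to_complex, ← integral_re h0]
    exact (setIntegral_congr_fun measurableSet_Ioc hcongr).symm

lemma aux_ascFact_pos {a : ℝ} (ha : 0 < a) (k : ℕ) : 0 < ascFact a k := by
  unfold ascFact
  exact Finset.prod_pos fun i _ => by positivity

lemma aux_Gamma_asc {a : ℝ} (ha : 0 < a) (k : ℕ) :
    Real.Gamma (a + k) = ascFact a k * Real.Gamma a := by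
  induction k with
  | zero => simp [ascFact]
  | succ k ih =>
    have : ascFact a (k+1) = ascFact a k * (a + k) := by simp [ascFact, Finset.prod_range_succ]
    rw [this, Nat.cast_succ, ← add_assoc, Real.Gamma_add_one (by positivity), ih]; ring

lemma aux_kummer {a c : ℝ} (ha : 0 < a) (hc : 0 < c) (z : ℝ) :
    ∫ s in Set.Ioo (0:ℝ) 1, s ^ (a - 1) * (1 - s) ^ (c - 1) * Real.exp (z * s)
      = ProbabilityTheory.beta a c * kummerM a (a + c) z := by
  obtain ⟨hi, -⟩ := aux_beta_int ha hc
  have key := hasSum_integral_of_dominated_convergence (μ := volume.restrict (Set.Ioo (0:ℝ) 1))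
    (F := fun (k : ℕ) s => s ^ (a - 1) * (1 - s) ^ (c - 1) * ((z * s) ^ k / k.factorial))
    (f := fun s => s ^ (a - 1) * (1 - s) ^ (c - 1) * Real.exp (z * s))
    (fun k s => s ^ (a - 1) * (1 - s) ^ (c - 1) * (|z| ^ k / k.factorial))
    (fun k => Measurable.aestronglyMeasurable (by fun_prop))
    (fun k => ae_restrict_of_forall_mem measurableSet_Ioo fun s hs => by
      have h1 : 0 < s := hs.1
      have h2 : 0 < 1 - s := by linarith [hs.2]
      have h3 := Real.rpow_pos_of_pos h1 (a-1)
      have h4 := Real.rpow_pos_of_pos h2 (c-1)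
      rw [norm_mul, Real.norm_of_nonneg (by positivity)]
      gcongr
      rw [Real.norm_eq_abs, abs_div, abs_pow, abs_mul, abs_of_pos h1,
        abs_of_pos (by positivity : (0:ℝ) < k.factorial)]
      gcongr
      nlinarith [abs_nonneg z, hs.2])
    (ae_of_all _ fun s => (Real.summable_pow_div_factorial |z|).mul_left _)
    (by
      simp_rw [tsum_mul_left]
      exact hi.mul_const _)
    (ae_of_all _ fun s => by
      apply HasSum.mul_left
      have := NormedSpace.expSeries_div_hasSum_exp (z * s)
      rwa [← Real.exp_eq_exp_ℝ] at this)
  rw [← key.tsum_eq, kummerM, ← tsum_mul_left]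
  congr 1; ext k
  have h1 : ∫ s in Set.Ioo (0:ℝ) 1, s ^ (a - 1) * (1 - s) ^ (c - 1) * ((z * s) ^ k / k.factorial)
      = (z ^ k / k.factorial) * ∫ s in Set.Ioo (0:ℝ) 1, s ^ ((a + k) - 1) * (1 - s) ^ (c - 1) := by
    rw [← integral_const_mul]
    refine setIntegral_congr_fun measurableSet_Ioo fun s hs => ?_
    have h1 : 0 < s := hs.1
    have : s ^ (a + k - 1) = s ^ (a - 1) * s ^ k := by
      rw [← Real.rpow_natCast s k, ← Real.rpow_add h1]; ring_nf
    simp only [this, mul_pow]; ring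
  rw [h1, (aux_beta_int (a := a + k) (by positivity) hc).2]
  unfold ProbabilityTheory.beta
  rw [aux_Gamma_asc ha, show a + (k:ℝ) + c = (a + c) + k by ring, aux_Gamma_asc (by positivity)]
  have := aux_ascFact_pos (show 0 < a + c by positivity) k
  have := Real.Gamma_pos_of_pos (show 0 < a + c by positivity)
  field_simp

/-- change of variables `t = s/(2(1-s))` -/
lemma aux_J {a d : ℝ} (ha : 0 < a) (hd : a < d) (z : ℝ) :
    ∫ t in Set.Ioi (0:ℝ), t ^ (a - 1) * ((1 + 2 * t) ^ (-d) * Real.exp (- z * (t / (1 + 2 * t))))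
      = Real.Gamma a * ((1/2) ^ a * (Real.Gamma (d - a) / Real.Gamma d) * kummerM a d (-z / 2)) := by
  set f : ℝ → ℝ := fun s => s / (2 * (1 - s)) with hf
  have himg : f '' Set.Ioo 0 1 = Set.Ioi 0 := by
    ext t
    simp only [Set.mem_image, Set.mem_Ioo, Set.mem_Ioi, hf]
    constructor
    · rintro ⟨s, ⟨h1, h2⟩, rfl⟩
      have : 0 < 1 - s := by linarith
      positivity
    · intro ht
      refine ⟨2 * t / (1 + 2 * t), ⟨by positivity, ?_⟩, ?_⟩
      · rw [div_lt_one (by positivity)]; linarith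
      · have : 1 - 2 * t / (1 + 2 * t) = 1 / (1 + 2 * t) := by field_simp; ring
        rw [this]; field_simp
  have hder : ∀ s ∈ Set.Ioo (0:ℝ) 1, HasDerivWithinAt f (1 / (2 * (1 - s) ^ 2)) (Set.Ioo 0 1) s := by
    intro s hs
    have h2 : 1 - s ≠ 0 := by linarith [hs.2]
    have := (hasDerivAt_id s).div (((hasDerivAt_id s).const_sub 1).const_mul 2)
      (by simpa using h2)
    refine (HasDerivAt.congr_deriv this ?_).hasDerivWithinAt
    simp only [id]
    field_simp; ring
  have hinj : Set.InjOn f (Set.Ioo 0 1) := by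
    intro s hs t ht h
    have h1 : 1 - s ≠ 0 := by linarith [hs.2]
    have h2 : 1 - t ≠ 0 := by linarith [ht.2]
    simp only [hf] at h
    field_simp at h
    linarith
  rw [← himg, integral_image_eq_integral_abs_deriv_smul measurableSet_Ioo hder hinj]
  have hk := aux_kummer ha (sub_pos.2 hd) (-z/2)
  have h3 : ∫ s in Set.Ioo (0:ℝ) 1, |1 / (2 * (1 - s) ^ 2)| • (f s ^ (a - 1) *
      ((1 + 2 * f s) ^ (-d) * Real.exp (- z * (f s / (1 + 2 * f s)))))
      = (1/2) ^ a * ∫ s in Set.Ioo (0:ℝ) 1, s ^ (a - 1) * (1 - s) ^ (d - a - 1) * Real.exp (-z/2 * s) := by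
    rw [← integral_const_mul]
    refine setIntegral_congr_fun measurableSet_Ioo fun s hs => ?_
    have h1 : 0 < s := hs.1
    have h2 : 0 < 1 - s := by linarith [hs.2]
    have e1 : 1 + 2 * f s = (1 - s)⁻¹ := by simp only [hf]; field_simp; ring
    have e2 : f s / (1 - s)⁻¹ = s / 2 := by simp only [hf]; field_simp
    have e3 : f s ^ (a - 1) = s ^ (a - 1) * (1/2) ^ (a-1) * (1 - s) ^ (-(a-1)) := by
      simp only [hf]
      rw [show s / (2 * (1 - s)) = s * (1/2) * (1-s)⁻¹ by field_simp,
        Real.mul_rpow (by positivity) (by positivity), Real.mul_rpow (by positivity) (by positivity),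
        Real.inv_rpow h2.le, Real.rpow_neg h2.le]
    have e4 : (1 - s) ^ (d - a - 1) = (1 - s) ^ (-(a-1)) * (1 - s) ^ d * ((1 - s) ^ 2)⁻¹ := by
      rw [← Real.rpow_natCast (1-s) 2, ← Real.rpow_neg h2.le, ← Real.rpow_add h2, ← Real.rpow_add h2]
      congr 1; push_cast; ring
    have e5 : (1/2:ℝ) ^ a = (1/2) ^ (a - 1) * (1/2) := by
      rw [← Real.rpow_add_one (by norm_num)]; ring_nf
    have e6 : (1 - s)⁻¹ ^ (-d) = (1 - s) ^ d := by
      rw [Real.inv_rpow h2.le, Real.rpow_neg h2.le, inv_inv]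
    simp only [smul_eq_mul]
    rw [e1, e2, e3, e4, e5, e6, abs_of_pos (by positivity), show -z * (s/2) = -z/2 * s by ring]
    field_simp
  rw [h3, hk, ProbabilityTheory.beta, show a + (d - a) = d by ring]
  ring

lemma aux_gauss1 {t : ℝ} (ht : 0 < t) (ν : ℝ) (h : ℝ → ℝ) :
    ∫ y, h y * Real.exp (-(t * y ^ 2)) ∂(gaussianReal ν 1) =
      ((1 + 2 * t) ^ (-(1/2) : ℝ) * Real.exp (-(ν ^ 2 * (t / (1 + 2 * t))))) *
        ∫ y, h y ∂(gaussianReal (ν / (1 + 2 * t)) (Real.toNNReal (1 / (1 + 2 * t)))) := by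
  have hp : 0 < 1 + 2 * t := by linarith
  have hv : Real.toNNReal (1 / (1 + 2 * t)) ≠ 0 := by
    simpa using hp
  rw [integral_gaussianReal_eq_integral_smul one_ne_zero,
    integral_gaussianReal_eq_integral_smul hv, ← integral_const_mul]
  congr 1; ext y
  simp only [gaussianPDFReal, smul_eq_mul, NNReal.coe_one, mul_one,
    Real.coe_toNNReal _ (show 0 ≤ 1 / (1 + 2 * t) by positivity)]
  have e1 : (√(2 * Real.pi))⁻¹ = (1 + 2 * t) ^ (-(1/2) : ℝ) * (√(2 * Real.pi * (1 / (1 + 2 * t))))⁻¹ := by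
    rw [Real.sqrt_mul (show 0 ≤ 2 * Real.pi by positivity) (1 / (1 + 2 * t)), Real.rpow_neg hp.le, ← Real.sqrt_eq_rpow,
      Real.sqrt_div zero_le_one, Real.sqrt_one]
    field_simp
  have e2 : Real.exp (-(y - ν) ^ 2 / 2) * Real.exp (-(t * y ^ 2)) =
      Real.exp (-(ν ^ 2 * (t / (1 + 2 * t)))) *
       Real.exp (-(y - ν / (1 + 2 * t)) ^ 2 / (2 * (1 / (1 + 2 * t)))) := by
    rw [← Real.exp_add, ← Real.exp_add]
    congr 1
    field_simp
    ring
  calc _ = (√(2 * Real.pi))⁻¹ * h y * (Real.exp (-(y - ν) ^ 2 / 2) * Real.exp (-(t * y ^ 2))) := by ring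
    _ = _ := by rw [e1, e2]; ring

lemma aux_gauss_sq (a : ℝ) (v : NNReal) : ∫ y, y ^ 2 ∂(gaussianReal a v) = a ^ 2 + v := by
  have h1 := variance_fun_id_gaussianReal (μ := a) (v := v)
  rw [variance_eq_sub (by simpa using! memLp_id_gaussianReal (μ := a) (v := v) 2)] at h1
  have h2 : ∫ y, y ∂(gaussianReal a v) = a := integral_id_gaussianReal
  simp only [Pi.pow_apply, h2] at h1
  linarith

/-- product formula -/
lemma aux_gauss_pi {m : ℕ} {t : ℝ} (ht : 0 < t) (ν : Fin m → ℝ) (i : Fin m) (h : ℝ → ℝ) :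
    ∫ y, h (y i) * Real.exp (-((∑ k, y k ^ 2) * t)) ∂(Measure.pi fun k => gaussianReal (ν k) 1) =
      ((1 + 2 * t) ^ (-((m:ℝ)/2)) * Real.exp (-(∑ k, ν k ^ 2) * (t / (1 + 2 * t)))) *
        ∫ y, h y ∂(gaussianReal (ν i / (1 + 2 * t)) (Real.toNNReal (1 / (1 + 2 * t)))) := by
  have hp : 0 < 1 + 2 * t := by linarith
  have e1 : ∀ y : Fin m → ℝ, h (y i) * Real.exp (-((∑ k, y k ^ 2) * t)) =
      ∏ k, (fun (k : Fin m) (u : ℝ) => (if k = i then h u else 1) * Real.exp (-(t * u ^ 2))) k (y k) := by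
    intro y
    simp only [Finset.prod_mul_distrib]
    rw [Finset.prod_ite_eq' Finset.univ i (fun k => h (y k)), if_pos (Finset.mem_univ i), ← Real.exp_sum]
    congr 2
    rw [Finset.sum_mul, ← Finset.sum_neg_distrib]
    exact Finset.sum_congr rfl fun k _ => by ring
  simp_rw [e1]
  rw [integral_fintype_prod_eq_prod
    (f := fun (k : Fin m) (u : ℝ) => (if k = i then h u else 1) * Real.exp (-(t * u ^ 2)))]
  simp_rw [aux_gauss1 ht]
  rw [Finset.prod_mul_distrib, Finset.prod_mul_distrib, Finset.prod_const, ← Real.exp_sum,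
    Finset.card_univ, Fintype.card_fin]
  congr 1
  · congr 1
    · rw [← Real.rpow_natCast, ← Real.rpow_mul hp.le]; congr 1; ring
    · congr 1
      rw [neg_mul, Finset.sum_mul, ← Finset.sum_neg_distrib]
  · rw [Finset.prod_eq_single i]
    · simp
    · intro k _ hk; simp [hk]
    · simp

/-- Fubini with the Gamma integral -/
lemma aux_fubini {m : ℕ} (μ : Measure (Fin m → ℝ)) [IsProbabilityMeasure μ] {a : ℝ} (ha : 0 < a)
    (φ : (Fin m → ℝ) → ℝ) (hφ : Measurable φ)
    (hb : ∀ y, |φ y| ≤ (∑ k, y k ^ 2) ^ a) :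
    Real.Gamma a * ∫ y, φ y * (1 / (∑ k, y k ^ 2)) ^ a ∂μ =
      ∫ t in Set.Ioi (0:ℝ), t ^ (a - 1) * ∫ y, φ y * Real.exp (-((∑ k, y k ^ 2) * t)) ∂μ := by
  have hr : ∀ y : Fin m → ℝ, 0 ≤ ∑ k, y k ^ 2 := fun y => Finset.sum_nonneg fun k _ => sq_nonneg _
  have hφ0 : ∀ y : Fin m → ℝ, ∑ k, y k ^ 2 = 0 → φ y = 0 := by
    intro y hy
    have := hb y
    rw [hy, Real.zero_rpow ha.ne'] at this
    exact abs_nonpos_iff.1 this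
  have hG := Real.Gamma_pos_of_pos ha
  have hin : ∀ y : Fin m → ℝ, ∫ t in Set.Ioi (0:ℝ), φ y * (t ^ (a - 1) * Real.exp (-((∑ k, y k ^ 2) * t)))
      = Real.Gamma a * (φ y * (1 / (∑ k, y k ^ 2)) ^ a) := by
    intro y
    rcases (hr y).eq_or_lt with h | h
    · simp [hφ0 y h.symm]
    · rw [integral_const_mul, Real.integral_rpow_mul_exp_neg_mul_Ioi ha h]; ring
  have hmeas : Measurable (Function.uncurry fun (y : Fin m → ℝ) (t : ℝ) =>
      φ y * (t ^ (a - 1) * Real.exp (-((∑ k, y k ^ 2) * t)))) := by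
    unfold Function.uncurry
    fun_prop
  have hint : Integrable (Function.uncurry fun (y : Fin m → ℝ) (t : ℝ) =>
      φ y * (t ^ (a - 1) * Real.exp (-((∑ k, y k ^ 2) * t))))
      (μ.prod (volume.restrict (Set.Ioi 0))) := by
    rw [integrable_prod_iff hmeas.aestronglyMeasurable]
    constructor
    · refine ae_of_all _ fun y => ?_
      simp only [Function.uncurry]
      rcases (hr y).eq_or_lt with h | h
      · simp [hφ0 y h.symm]
      · apply Integrable.const_mul
        by_contra hcon
        have h1 := integral_undef hcon
        rw [Real.integral_rpow_mul_exp_neg_mul_Ioi ha h] at h1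
        have : 0 < (1 / (∑ k, y k ^ 2)) ^ a * Real.Gamma a := by positivity
        linarith
    · have : ∀ y : Fin m → ℝ, ∫ t in Set.Ioi (0:ℝ), ‖Function.uncurry (fun (y : Fin m → ℝ) (t : ℝ) =>
      φ y * (t ^ (a - 1) * Real.exp (-((∑ k, y k ^ 2) * t)))) (y, t)‖
        = Real.Gamma a * (|φ y| * (1 / (∑ k, y k ^ 2)) ^ a) := by
        intro y
        have e : ∀ t ∈ Set.Ioi (0:ℝ), ‖Function.uncurry (fun (y : Fin m → ℝ) (t : ℝ) =>
            φ y * (t ^ (a - 1) * Real.exp (-((∑ k, y k ^ 2) * t)))) (y, t)‖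
            = |φ y| * (t ^ (a - 1) * Real.exp (-((∑ k, y k ^ 2) * t))) := by
          intro t ht
          have ht' : 0 < t := ht
          simp only [Function.uncurry]
          rw [norm_mul, Real.norm_eq_abs, Real.norm_of_nonneg (by positivity)]
        rw [setIntegral_congr_fun measurableSet_Ioi e]
        rcases (hr y).eq_or_lt with h | h
        · simp [hφ0 y h.symm]
        · rw [integral_const_mul, Real.integral_rpow_mul_exp_neg_mul_Ioi ha h]; ring
      simp_rw [this]
      apply Integrable.const_mul
      apply Integrable.of_bound (C := 1)
      · exact Measurable.aestronglyMeasurable (by fun_prop)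
      · refine ae_of_all _ fun y => ?_
        rw [Real.norm_of_nonneg (by have := hr y; positivity)]
        rcases (hr y).eq_or_lt with h | h
        · simp [hφ0 y h.symm]
        · rw [Real.div_rpow zero_le_one h.le, Real.one_rpow, mul_one_div, div_le_one (by positivity)]
          exact hb y
  calc _ = ∫ y, ∫ t in Set.Ioi (0:ℝ), φ y * (t ^ (a - 1) * Real.exp (-((∑ k, y k ^ 2) * t))) ∂volume ∂μ := by
        simp_rw [hin]; rw [integral_const_mul]
    _ = ∫ t in Set.Ioi (0:ℝ), ∫ y, φ y * (t ^ (a - 1) * Real.exp (-((∑ k, y k ^ 2) * t))) ∂μ :=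
        integral_integral_swap hint
    _ = _ := by
        congr 1; ext t
        rw [← integral_const_mul]
        congr 1; ext y; ring

lemma aux_mom1 {m : ℕ} (ν : Fin m → ℝ) (i : Fin m) (x : ℝ) (hx : x ^ 2 = ∑ k, ν k ^ 2) :
    x * ∫ y, y i * (1 / (∑ k, y k ^ 2)) ^ (1/2 : ℝ) ∂(Measure.pi fun k => gaussianReal (ν k) 1)
      = ν i * varrho m x := by
  have hb : ∀ y : Fin m → ℝ, |y i| ≤ (∑ k, y k ^ 2) ^ (1/2 : ℝ) := by
    intro y
    rw [← Real.sqrt_eq_rpow]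
    apply Real.abs_le_sqrt
    exact Finset.single_le_sum (f := fun k => y k ^ 2) (fun k _ => sq_nonneg _) (Finset.mem_univ i)
  have h1 := aux_fubini (Measure.pi fun k => gaussianReal (ν k) 1) (a := 1/2) (by norm_num)
    (fun y => y i) (by fun_prop) hb
  have hd : (1/2:ℝ) < (m:ℝ)/2 + 1 := by have : (0:ℝ) ≤ m := Nat.cast_nonneg m
                                        linarith
  have h2 : ∫ t in Set.Ioi (0:ℝ), t ^ ((1/2:ℝ) - 1) * ∫ y : Fin m → ℝ, y i * Real.exp (-((∑ k, y k ^ 2) * t))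
        ∂(Measure.pi fun k => gaussianReal (ν k) 1)
      = ν i * ∫ t in Set.Ioi (0:ℝ), t ^ ((1/2:ℝ) - 1) * ((1 + 2 * t) ^ (-((m:ℝ)/2 + 1)) *
          Real.exp (- (x^2) * (t / (1 + 2 * t)))) := by
    rw [← integral_const_mul]
    refine setIntegral_congr_fun measurableSet_Ioi fun t ht => ?_
    have ht' : 0 < t := ht
    have hp : 0 < 1 + 2 * t := by positivity
    rw [aux_gauss_pi ht' ν i (fun y => y), integral_id_gaussianReal, hx, neg_add,
      Real.rpow_add hp, Real.rpow_neg_one]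
    field_simp
  rw [h2, aux_J (by norm_num) hd] at h1
  have hG := Real.Gamma_pos_of_pos (show (0:ℝ) < 1/2 by norm_num)
  have h3 : ∫ y, y i * (1 / (∑ k, y k ^ 2)) ^ (1/2 : ℝ) ∂(Measure.pi fun k => gaussianReal (ν k) 1) =
      ν i * ((1 / 2) ^ (1 / 2 : ℝ) * (Real.Gamma ((m:ℝ) / 2 + 1 - 1 / 2) / Real.Gamma ((m:ℝ) / 2 + 1))
        * kummerM (1 / 2) ((m:ℝ) / 2 + 1) (-x ^ 2 / 2)) := by
    apply mul_left_cancel₀ hG.ne'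
    rw [h1]; ring
  rw [h3, varrho, ← Real.sqrt_eq_rpow, Real.sqrt_div zero_le_one, Real.sqrt_one,
    show (m:ℝ) / 2 + 1 - 1 / 2 = ((m:ℝ) + 1) / 2 by ring, show (m:ℝ) / 2 + 1 = ((m:ℝ) + 2) / 2 by ring]
  field_simp

lemma aux_decay_int {d q : ℝ} (hd : 1 < d) (hq : 0 ≤ q) :
    IntegrableOn (fun t : ℝ => (1 + 2 * t) ^ (-d) * Real.exp (- q * (t / (1 + 2 * t)))) (Set.Ioi 0) := by
  have h := integrableOn_add_rpow_Ioi_of_lt (a := -d) (c := 0) (m := 1) (by linarith) (by norm_num)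
  refine Integrable.mono' h (Measurable.aestronglyMeasurable (by fun_prop)) ?_
  refine ae_restrict_of_forall_mem measurableSet_Ioi fun t ht => ?_
  have ht' : 0 < t := ht
  rw [Real.norm_of_nonneg (by positivity)]
  have h1 : (1 + 2 * t) ^ (-d) ≤ (t + 1) ^ (-d) :=
    Real.rpow_le_rpow_of_nonpos (by positivity) (by linarith) (by linarith)
  have h2 : Real.exp (- q * (t / (1 + 2 * t))) ≤ 1 := by
    rw [Real.exp_le_one_iff]
    have : 0 ≤ q * (t / (1 + 2 * t)) := by positivity
    linarith
  calc _ ≤ (t + 1) ^ (-d) * 1 := by gcongr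
    _ = _ := mul_one _

lemma aux_mom2 {m : ℕ} (hm : 1 ≤ m) (ν : Fin m → ℝ) (x : ℝ) (hx : x ^ 2 = ∑ k, ν k ^ 2) :
    ∃ K : ℝ, ∀ i, ∫ y, y i ^ 2 * (1 / (∑ k, y k ^ 2)) ∂(Measure.pi fun k => gaussianReal (ν k) 1)
      = ν i ^ 2 * K + gFun m x := by
  refine ⟨∫ t in Set.Ioi (0:ℝ), (1 + 2 * t) ^ (-((m:ℝ)/2 + 2)) *
          Real.exp (- (x^2) * (t / (1 + 2 * t))), fun i => ?_⟩
  have hm' : (1:ℝ) ≤ m := by exact_mod_cast hm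
  have hb : ∀ y : Fin m → ℝ, |y i ^ 2| ≤ (∑ k, y k ^ 2) ^ (1 : ℝ) := by
    intro y
    rw [Real.rpow_one, abs_of_nonneg (sq_nonneg _)]
    exact Finset.single_le_sum (f := fun k => y k ^ 2) (fun k _ => sq_nonneg _) (Finset.mem_univ i)
  have h1 := aux_fubini (Measure.pi fun k => gaussianReal (ν k) 1) (a := 1) (by norm_num)
    (fun y => y i ^ 2) (by fun_prop) hb
  simp only [Real.Gamma_one, one_mul, Real.rpow_one, sub_self, Real.rpow_zero] at h1
  rw [h1]
  have hJ := aux_J (a := 1) (d := (m:ℝ)/2 + 1) (by norm_num) (by linarith) (x^2)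
  simp only [Real.Gamma_one, one_mul, Real.rpow_one, sub_self, Real.rpow_zero, add_sub_cancel_right] at hJ
  have hg : gFun m x = ∫ t in Set.Ioi (0:ℝ), (1 + 2 * t) ^ (-((m:ℝ)/2 + 1)) *
          Real.exp (- (x^2) * (t / (1 + 2 * t))) := by
    rw [hJ, gFun, Real.Gamma_add_one (by positivity)]
    have := Real.Gamma_pos_of_pos (show (0:ℝ) < (m:ℝ)/2 by positivity)
    field_simp
  rw [hg, ← integral_const_mul, ← integral_add
    ((aux_decay_int (by linarith) (by positivity)).const_mul _)
    (aux_decay_int (by linarith) (by positivity))]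
  refine setIntegral_congr_fun measurableSet_Ioi fun t ht => ?_
  have ht' : 0 < t := ht
  have hp : 0 < 1 + 2 * t := by positivity
  rw [aux_gauss_pi ht' ν i (fun y => y ^ 2), aux_gauss_sq, hx, neg_add, neg_add,
    Real.rpow_add hp, Real.rpow_add hp, Real.rpow_neg_one, Real.rpow_neg hp.le 2,
    Real.coe_toNNReal _ (by positivity), Real.rpow_two]
  field_simp

lemma aux_bdd {m : ℕ} (y : Fin m → ℝ) (i : Fin m) : |y i * (euclNorm y)⁻¹| ≤ 1 := by
  have h0 : |y i| ≤ euclNorm y := by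
    apply Real.abs_le_sqrt
    exact Finset.single_le_sum (f := fun k => y k ^ 2) (fun k _ => sq_nonneg _) (Finset.mem_univ i)
  rw [abs_mul, abs_inv, abs_of_nonneg (show 0 ≤ euclNorm y from Real.sqrt_nonneg _)]
  rcases (show 0 ≤ euclNorm y from Real.sqrt_nonneg _).eq_or_lt with h | h
  · rw [← h]; simp
  · rw [← div_eq_mul_inv, div_le_one h]; exact h0

lemma aux_meas {m : ℕ} (i : Fin m) : Measurable (fun y : Fin m → ℝ => y i * (euclNorm y)⁻¹) := by
  unfold euclNorm; fun_prop

lemma aux_var {m : ℕ} (hm : 1 ≤ m) (ν : Fin m → ℝ) (x : ℝ) (hx : x ^ 2 = ∑ k, ν k ^ 2) (hx0 : x ≠ 0)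
    (i : Fin m) :
    variance (fun y : Fin m → ℝ => y i * (euclNorm y)⁻¹) (Measure.pi fun k => gaussianReal (ν k) 1)
      = (fFun m x - gFun m x) * (ν i / x) ^ 2 + gFun m x := by
  set Q := Measure.pi fun k => gaussianReal (ν k) 1 with hQ
  have hmem : MemLp (fun y : Fin m → ℝ => y i * (euclNorm y)⁻¹) 2 Q :=
    MemLp.of_bound (aux_meas i).aestronglyMeasurable 1 (ae_of_all _ fun y => aux_bdd y i)
  rw [variance_eq_sub hmem]
  have hr : ∀ y : Fin m → ℝ, 0 ≤ ∑ k, y k ^ 2 := fun y => Finset.sum_nonneg fun k _ => sq_nonneg _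
  have e1 : ∀ y : Fin m → ℝ, y i * (euclNorm y)⁻¹ = y i * (1 / (∑ k, y k ^ 2)) ^ (1/2 : ℝ) := by
    intro y
    rw [euclNorm, ← Real.sqrt_eq_rpow, Real.sqrt_div zero_le_one, Real.sqrt_one, one_div]
  have e2 : ∀ (j : Fin m) (y : Fin m → ℝ), (y j * (euclNorm y)⁻¹) ^ 2 = y j ^ 2 * (1 / (∑ k, y k ^ 2)) := by
    intro j y
    rw [euclNorm, mul_pow, inv_pow, Real.sq_sqrt (hr y), one_div]
  obtain ⟨K, hK⟩ := aux_mom2 hm ν x hx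
  have hsum : x ^ 2 * K + m * gFun m x = 1 := by
    have h1 : ∑ j, ∫ y, y j ^ 2 * (1 / (∑ k, y k ^ 2)) ∂Q = 1 := by
      rw [← integral_finsetSum]
      · have : ∀ᵐ y ∂Q, ∑ j, y j ^ 2 * (1 / (∑ k, y k ^ 2)) = 1 := by
          have hne : ∀ᵐ y ∂Q, y ≠ 0 := by
            have : NullSingletonClass (gaussianReal (ν i) 1) :=
              nullSingletonClass_gaussianReal one_ne_zero
            have : Q {0} = 0 := by
              rw [hQ, ← Set.univ_pi_singleton, Measure.pi_pi]
              exact Finset.prod_eq_zero (Finset.mem_univ i) (measure_singleton _)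
            exact measure_eq_zero_iff_ae_notMem.1 this
          filter_upwards [hne] with y hy
          rw [← Finset.sum_mul, mul_one_div, div_self]
          intro h
          apply hy
          rw [Finset.sum_eq_zero_iff_of_nonneg (fun k _ => sq_nonneg _)] at h
          ext k
          simpa using h k (Finset.mem_univ k)
        rw [integral_congr_ae this]; simp
      · intro j _
        simp_rw [← e2 j]
        exact (MemLp.of_bound (p := 2) (aux_meas j).aestronglyMeasurable 1
          (ae_of_all _ fun y => aux_bdd y j)).integrable_sq
    rw [Finset.sum_congr rfl (fun j _ => hK j), Finset.sum_add_distrib, ← Finset.sum_mul, ← hx] at h1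
    simpa using h1
  have m1 := aux_mom1 ν i x hx
  have m2 := hK i
  simp only [Pi.pow_apply]
  simp_rw [e2 i, e1]
  rw [m2]
  have m1' : ∫ y, y i * (1 / (∑ k, y k ^ 2)) ^ (1/2 : ℝ) ∂Q = ν i / x * varrho m x := by
    field_simp; linarith
  rw [m1']
  have hf : fFun m x = 1 - (m - 1) * gFun m x - varrho m x ^ 2 := by
    have : (m:ℝ) ≠ 0 := by positivity
    rw [fFun, gFun]; field_simp
  rw [hf, show (1:ℝ) - (m - 1) * gFun m x - varrho m x ^ 2 - gFun m x = x ^ 2 * K - varrho m x ^ 2 by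
    linarith]
  field_simp
  ring

lemma aux_law {n m : ℕ} (ν : Fin m → ℝ) (M : Matrix (Fin m) (Fin n) ℝ) (hM : M * Mᵀ = 1) :
    Measure.map (fun x => ν + M.mulVec x) (stdGaussianPi n)
      = Measure.pi fun k => gaussianReal (ν k) 1 := by
  have : IsProbabilityMeasure (stdGaussianPi n) := by unfold stdGaussianPi; infer_instance
  have hmeas : Measurable (fun x : Fin n → ℝ => ν + M.mulVec x) :=
    (by fun_prop : Continuous (fun x : Fin n → ℝ => ν + M.mulVec x)).measurable
  have := Measure.isProbabilityMeasure_map (μ := stdGaussianPi n) hmeas.aemeasurable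
  have key : (Measure.map (fun x => ν + M.mulVec x) (stdGaussianPi n)).map (WithLp.toLp 2)
      = (Measure.pi fun k => gaussianReal (ν k) 1).map (WithLp.toLp 2) := by
    apply Measure.ext_of_charFun (E := EuclideanSpace ℝ (Fin m))
    ext t
    rw [charFun_pi, Measure.map_map (by fun_prop) hmeas]
    have h1 : charFun (Measure.map (WithLp.toLp 2 ∘ fun x => ν + M.mulVec x) (stdGaussianPi n)) t
        = Complex.exp (((∑ k, ν k * t k : ℝ) : ℂ) * Complex.I) *
          charFun ((stdGaussianPi n).map (WithLp.toLp 2)) (WithLp.toLp 2 (Mᵀ.mulVec t.ofLp)) := by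
      rw [charFun_apply, charFun_apply, integral_map (by fun_prop) (by fun_prop),
        integral_map (by fun_prop) (by fun_prop), ← integral_const_mul]
      congr 1; ext x
      rw [← Complex.exp_add, ← add_mul, ← Complex.ofReal_add]
      congr 3
      simp only [Function.comp, PiLp.inner_apply, RCLike.inner_apply, conj_trivial, Pi.add_apply,
        mul_add, Finset.sum_add_distrib]
      have : ∑ k, t.ofLp k * M.mulVec x k = ∑ k, (Mᵀ.mulVec t.ofLp) k * x k := by
        change t.ofLp ⬝ᵥ M.mulVec x = (Mᵀ.mulVec t.ofLp) ⬝ᵥ x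
        rw [Matrix.dotProduct_mulVec, Matrix.mulVec_transpose]
      rw [this]
      congr 1
      exact Finset.sum_congr rfl fun k _ => mul_comm _ _
    rw [h1, stdGaussianPi, charFun_pi]
    simp_rw [charFun_gaussianReal]
    rw [← Complex.exp_sum, ← Complex.exp_sum, ← Complex.exp_add]
    congr 1
    have hnorm : ∑ k, (Mᵀ.mulVec t.ofLp) k ^ 2 = ∑ k, t k ^ 2 := by
      have : (Mᵀ.mulVec t.ofLp) ⬝ᵥ (Mᵀ.mulVec t.ofLp) = t.ofLp ⬝ᵥ t.ofLp := by
        rw [Matrix.dotProduct_mulVec, Matrix.vecMul_transpose, Matrix.mulVec_mulVec, hM, Matrix.one_mulVec]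
      simpa [dotProduct, sq] using this
    have hnorm' : ∑ k, (((Mᵀ.mulVec t.ofLp) k : ℝ) : ℂ) ^ 2 = ∑ k, ((t k : ℝ) : ℂ) ^ 2 := by
      exact_mod_cast hnorm
    simp only [Complex.ofReal_zero, mul_zero, zero_mul, zero_sub, NNReal.coe_one, Complex.ofReal_one,
      one_mul, Finset.sum_sub_distrib, Finset.sum_neg_distrib]
    rw [← Finset.sum_div, ← Finset.sum_div, hnorm', ← Finset.sum_mul]
    push_cast
    simp_rw [mul_comm]
    ring
  have h2 := congrArg (Measure.map (WithLp.ofLp : EuclideanSpace ℝ (Fin m) → (Fin m → ℝ))) key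
  have hid : (WithLp.ofLp : EuclideanSpace ℝ (Fin m) → (Fin m → ℝ)) ∘ (WithLp.toLp 2) = id := rfl
  have h3 : ∀ κ : Measure (Fin m → ℝ), Measure.map
      (WithLp.ofLp : EuclideanSpace ℝ (Fin m) → (Fin m → ℝ)) (κ.map (WithLp.toLp 2)) = κ := by
    intro κ
    rw [Measure.map_map (by fun_prop) (by fun_prop), hid, Measure.map_id]
  rwa [h3, h3] at h2

lemma aux_basis {m : ℕ} (hm : 1 ≤ m) (θ : Fin (m+1) → ℝ) (hθ : ∑ k, θ k ^ 2 = 1) (hs : ∑ k, θ k = 0) :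
    ∃ B : Matrix (Fin m) (Fin (m+1)) ℝ, B * Bᵀ = 1 ∧ (∀ i, ∑ k, B i k = 0) ∧
      Bᵀ * B = centerMat (m+1) ∧ ∃ i, B i = θ := by
  let i0 : Fin m := ⟨0, hm⟩
  let r : ℝ := (Real.sqrt (m+1))⁻¹
  have hr0 : r ≠ 0 := by simp only [r]; positivity
  have hr : (m+1) * (r * r) = 1 := by
    simp only [r]
    rw [← mul_inv, Real.mul_self_sqrt (by positivity)]; field_simp
  let v : Option (Fin m) → EuclideanSpace ℝ (Fin (m+1)) := fun o =>
    match o with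
    | none => WithLp.toLp 2 (fun _ => r)
    | some _ => WithLp.toLp 2 θ
  have hv : Orthonormal ℝ (({none, some i0} : Set (Option (Fin m))).domRestrict v) := by
    rw [orthonormal_iff_ite]
    rintro ⟨a, ha⟩ ⟨b, hb⟩
    have hs' : ∑ k, r * θ k = 0 := by rw [← Finset.mul_sum, hs, mul_zero]
    have hs'' : ∑ k, θ k * r = 0 := by rw [← Finset.sum_mul, hs, zero_mul]
    simp only [Set.mem_insert_iff, Set.mem_singleton_iff] at ha hb
    have hθ2 : ∑ k, θ k * θ k = 1 := by simpa [sq] using hθ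
    have hr2 : ∑ _k : Fin (m+1), r * r = 1 := by simpa using hr
    rcases ha with rfl | rfl <;> rcases hb with rfl | rfl <;>
      simp only [v, Set.domRestrict_apply, PiLp.inner_apply, RCLike.inner_apply, conj_trivial,
        hs', hs'', hθ2, hr2] <;> simp
  obtain ⟨b, hb⟩ := hv.exists_orthonormalBasis_extension_of_card_eq (by simp)
  have hbn : b none = WithLp.toLp 2 (fun _ => r) := hb none (by simp)
  have hb0 : b (some i0) = WithLp.toLp 2 θ := hb (some i0) (by simp)
  have hin : ∀ o p, ∑ k, (b o) k * (b p) k = if o = p then 1 else 0 := by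
    intro o p
    have := orthonormal_iff_ite.1 b.orthonormal o p
    simp only [PiLp.inner_apply, RCLike.inner_apply, conj_trivial] at this
    rw [← this]
    exact Finset.sum_congr rfl fun k _ => mul_comm _ _
  let C : Matrix (Option (Fin m)) (Fin (m+1)) ℝ := Matrix.of fun o k => (b o) k
  have hC : C * Cᵀ = 1 := by
    ext o p
    simp only [Matrix.mul_apply, Matrix.transpose_apply, C, Matrix.of_apply, hin, Matrix.one_apply]
  have hC' : Cᵀ * C = 1 := by
    exact (Matrix.mul_eq_one_comm_of_card_eq _ _ _ (by simp)).1 hC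
  refine ⟨Matrix.of fun i k => (b (some i)) k, ?_, ?_, ?_, i0, ?_⟩
  · ext i j
    simp [Matrix.mul_apply, hin, Matrix.one_apply]
  · intro i
    have := hin none (some i)
    simp only [hbn, ← Finset.mul_sum] at this
    simpa [hr0] using this
  · ext k l
    have := congrFun (congrFun hC' k) l
    simp only [Matrix.mul_apply, Matrix.transpose_apply, C, Matrix.of_apply, Fintype.sum_option, hbn] at this
    simp only [Matrix.mul_apply, Matrix.transpose_apply, Matrix.of_apply, centerMat, Matrix.sub_apply,
      Matrix.smul_apply, smul_eq_mul, mul_one]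
    have hr' : ((m+1 : ℕ) : ℝ)⁻¹ = r * r := by push_cast; field_simp; linarith
    rw [hr']; linarith
  · ext k
    simp [hb0]

lemma aux_norm {n m : ℕ} (B : Matrix (Fin m) (Fin n) ℝ) (h1 : B * Bᵀ = 1)
    (h2 : Bᵀ * B = centerMat n) (z : Fin n → ℝ) :
    euclNorm ((centerMat n).mulVec z) = euclNorm (B.mulVec z) := by
  unfold euclNorm
  congr 1
  have : ((centerMat n).mulVec z) ⬝ᵥ ((centerMat n).mulVec z) = (B.mulVec z) ⬝ᵥ (B.mulVec z) := by
    rw [← h2, ← Matrix.mulVec_mulVec, Matrix.dotProduct_mulVec, Matrix.vecMul_transpose,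
      Matrix.mulVec_mulVec, h1, Matrix.one_mulVec]
  simpa [dotProduct, sq] using this

lemma aux_chi {n m : ℕ} (B : Matrix (Fin m) (Fin n) ℝ) (h1 : B * Bᵀ = 1)
    (h2 : Bᵀ * B = centerMat n) (θ : Fin n → ℝ) (i : Fin m) (hi : B i = θ) (z : Fin n → ℝ) :
    θ ⬝ᵥ chi z = B.mulVec z i * (euclNorm (B.mulVec z))⁻¹ := by
  have : θ ⬝ᵥ (centerMat n).mulVec z = B.mulVec z i := by
    change _ = B i ⬝ᵥ z
    have h3 : (B.mulVec ((centerMat n).mulVec z)) i = B.mulVec z i := by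
      rw [← h2, Matrix.mulVec_mulVec, ← Matrix.mul_assoc, h1, Matrix.one_mul]
    rw [← hi]; exact h3
  rw [chi, dotProduct_smul, this, aux_norm B h1 h2, smul_eq_mul, mul_comm]

lemma aux_scale {m : ℕ} {c : ℝ} (hc : 0 < c) (y : Fin m → ℝ) : euclNorm (c • y) = c * euclNorm y := by
  unfold euclNorm
  simp only [Pi.smul_apply, smul_eq_mul, mul_pow]
  rw [← Finset.mul_sum, Real.sqrt_mul (by positivity), Real.sqrt_sq hc.le]

/-- variance of `T_{χ(Z)}(θ)` for `Z ~ N(μ, σ²Ξ)`. -/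
theorem stmt15 {Ω : Type*} [MeasurableSpace Ω] (P : Measure Ω) [IsProbabilityMeasure P]
    {n : ℕ} (hn : 3 ≤ n) (σ ρ : ℝ) (hσ : 0 < σ)
    (hρ₁ : -(1 / (n : ℝ)) < ρ) (hρ₂ : ρ < 1)
    (μ : Fin n → ℝ) (Z : Ω → Fin n → ℝ)
    (hgauss : IsGaussianVec P Z μ (σ ^ 2 • Ximat n ρ))
    (hPμ : (centerMat n).mulVec μ ≠ 0) :
    ∀ θ : Fin n → ℝ, euclNorm θ = 1 → (∑ i, θ i) = 0 →
      variance (fun ω => θ ⬝ᵥ chi (Z ω)) P =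
        (fFun (n - 1) (euclNorm ((centerMat n).mulVec μ) / (σ * Real.sqrt (1 - ρ))) -
          gFun (n - 1) (euclNorm ((centerMat n).mulVec μ) / (σ * Real.sqrt (1 - ρ)))) *
          (chi μ ⬝ᵥ θ) ^ 2 +
        gFun (n - 1) (euclNorm ((centerMat n).mulVec μ) / (σ * Real.sqrt (1 - ρ))) := by
  intro θ hθ hs
  obtain ⟨m, rfl⟩ : ∃ m, n = m + 1 := ⟨n - 1, by omega⟩
  have hm : 1 ≤ m := by omega
  rw [Nat.add_sub_cancel]
  have hθ' : ∑ k, θ k ^ 2 = 1 := by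
    have := congrArg (· ^ 2) hθ
    simp only [euclNorm] at this
    rw [Real.sq_sqrt (Finset.sum_nonneg fun k _ => sq_nonneg _)] at this
    simpa using this
  obtain ⟨B, hB1, hBs, hB2, i, hi⟩ := aux_basis hm θ hθ' hs
  obtain ⟨A, hA, hlaw⟩ := hgauss
  set s := σ * Real.sqrt (1 - ρ) with hsdef
  have hs0 : 0 < s := mul_pos hσ (Real.sqrt_pos.2 (by linarith))
  have hs2 : s ^ 2 = σ ^ 2 * (1 - ρ) := by
    rw [hsdef, mul_pow, Real.sq_sqrt (by linarith)]
  have hAm : Measurable (fun x : Fin (m+1) → ℝ => μ + A.mulVec x) :=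
    (by fun_prop : Continuous (fun x : Fin (m+1) → ℝ => μ + A.mulVec x)).measurable
  have hprob : IsProbabilityMeasure (stdGaussianPi (m+1)) := by unfold stdGaussianPi; infer_instance
  have hZ : AEMeasurable Z P := by
    by_contra hcon
    rw [Measure.map_of_not_aemeasurable hcon] at hlaw
    have h1 := Measure.isProbabilityMeasure_map (μ := stdGaussianPi (m+1)) hAm.aemeasurable
    rw [← hlaw] at h1
    have h2 := h1.measure_univ
    rw [Measure.coe_zero, Pi.zero_apply] at h2
    exact zero_ne_one h2
  let L : (Fin (m+1) → ℝ) → (Fin m → ℝ) := fun z => s⁻¹ • B.mulVec z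
  have hL : Measurable L :=
    (by fun_prop : Continuous (fun z : Fin (m+1) → ℝ => s⁻¹ • B.mulVec z)).measurable
  let h : (Fin m → ℝ) → ℝ := fun y => y i * (euclNorm y)⁻¹
  have hh : Measurable h := aux_meas i
  have hpt : ∀ z, θ ⬝ᵥ chi z = h (L z) := by
    intro z
    rw [aux_chi B hB1 hB2 θ i hi]
    simp only [h, L]
    rw [aux_scale (by positivity)]
    simp only [Pi.smul_apply, smul_eq_mul]
    field_simp
  have hBX : B * (σ ^ 2 • Ximat (m+1) ρ) * Bᵀ = s ^ 2 • (1 : Matrix (Fin m) (Fin m) ℝ) := by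
    have e : B * (σ ^ 2 • Ximat (m+1) ρ) = s ^ 2 • B := by
      ext j k
      have : ∀ l, B j l * ((σ ^ 2 • Ximat (m+1) ρ) l k) =
          σ ^ 2 * ρ * B j l + (if l = k then s ^ 2 * B j l else 0) := by
        intro l
        simp only [Ximat, Matrix.smul_apply, Matrix.of_apply, smul_eq_mul]
        split_ifs
        · rw [hs2]; ring
        · ring
      rw [Matrix.mul_apply, Finset.sum_congr rfl fun l _ => this l, Finset.sum_add_distrib,
        ← Finset.mul_sum, hBs j, Finset.sum_ite_eq' Finset.univ k]
      simp
    rw [e, Matrix.smul_mul, hB1]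
  have hlaw2 : Measure.map L (Measure.map Z P) =
      Measure.pi fun k => gaussianReal (L μ k) 1 := by
    rw [hlaw, Measure.map_map hL hAm]
    have e : (L ∘ fun x => μ + A.mulVec x) = fun x => L μ + (s⁻¹ • (B * A)).mulVec x := by
      ext1 x
      simp only [Function.comp, L, Matrix.mulVec_add, smul_add, Matrix.mulVec_mulVec, Matrix.smul_mulVec]
    rw [e]
    apply aux_law
    rw [Matrix.transpose_smul, Matrix.smul_mul, Matrix.mul_smul, Matrix.transpose_mul,
      Matrix.mul_assoc, ← Matrix.mul_assoc A, hA, ← Matrix.mul_assoc, hBX, smul_smul, smul_smul]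
    have : s⁻¹ * s⁻¹ * s ^ 2 = 1 := by field_simp
    rw [this, one_smul]
  have hvar : variance (fun ω => θ ⬝ᵥ chi (Z ω)) P =
      variance h (Measure.pi fun k => gaussianReal (L μ k) 1) := by
    rw [← hlaw2, variance_map hh.aemeasurable hL.aemeasurable,
      variance_map (hh.comp hL).aemeasurable hZ]
    congr 1
    ext ω
    exact hpt (Z ω)
  have hN0 : euclNorm ((centerMat (m+1)).mulVec μ) ≠ 0 := by
    intro h0
    apply hPμ
    rw [euclNorm, Real.sqrt_eq_zero (Finset.sum_nonneg fun k _ => sq_nonneg _),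
      Finset.sum_eq_zero_iff_of_nonneg (fun k _ => sq_nonneg _)] at h0
    ext k
    simpa using h0 k (Finset.mem_univ k)
  have hxe : euclNorm ((centerMat (m+1)).mulVec μ) / s = euclNorm (L μ) := by
    rw [aux_norm B hB1 hB2]
    simp only [L]
    rw [aux_scale (by positivity)]
    field_simp
  have hx2 : (euclNorm ((centerMat (m+1)).mulVec μ) / s) ^ 2 = ∑ k, L μ k ^ 2 := by
    rw [hxe, euclNorm, Real.sq_sqrt (Finset.sum_nonneg fun k _ => sq_nonneg _)]
  rw [hvar, aux_var hm (L μ) _ hx2 (div_ne_zero hN0 hs0.ne') i, dotProduct_comm, hpt μ]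
  congr 3
  rw [hxe, div_eq_mul_inv]
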